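/- arXiv:2205.05923 — 4 statements merged into one kernel-verified Lean document; each statement's English description precedes it below -/
import Mathlib

section
/- Let G be a connected graph on vertex set [n]. Then the ideal I_X of 2-minors of the 2×n Hankel matrix is a minimal prime ideal of the Hankel edge ideal I_G, and consequently the height of I_G is at most n-1. -/
open MvPolynomial

/-- The Hankel binomial `g_{ij} = x_i x_{j+1} - x_j x_{i+1}` (0-indexed vertices). -/
noncomputable def hg (n : ℕ) (K : Type*) [Field K] (i j : Fin n) :
    MvPolynomial (Fin (n + 1)) K :=
  X i.castSucc * X j.succ - X j.castSucc * X i.succ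

/-- The generating set of the Hankel edge ideal of a graph `G` on `[n]`. -/
noncomputable def hgenSet (n : ℕ) (K : Type*) [Field K] (G : SimpleGraph (Fin n)) :
    Set (MvPolynomial (Fin (n + 1)) K) :=
  { f | ∃ i j : Fin n, i < j ∧ G.Adj i j ∧ f = hg n K i j }

/-- The Hankel edge ideal `I_G`. -/
noncomputable def hankelIdeal (n : ℕ) (K : Type*) [Field K] (G : SimpleGraph (Fin n)) :
    Ideal (MvPolynomial (Fin (n + 1)) K) :=
  Ideal.span (hgenSet n K G)

/-- `I_X`, the ideal of 2-minors of the 2×n Hankel matrix, i.e. `I_{K_n}`. -/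
noncomputable def IX (n : ℕ) (K : Type*) [Field K] :
    Ideal (MvPolynomial (Fin (n + 1)) K) :=
  hankelIdeal n K ⊤

/-- The height of an ideal: the infimum of the heights of primes containing it. -/
noncomputable def ht {R : Type*} [CommRing R] (I : Ideal R) : ℕ∞ :=
  ⨅ (p : PrimeSpectrum R) (_ : I ≤ p.asIdeal), Order.height p

/-- The minimal number of generators of an ideal. -/
noncomputable def mu {R : Type*} [CommRing R] (I : Ideal R) : ℕ∞ :=
  ⨅ (s : Finset R) (_ : Ideal.span (s : Set R) = I), (s.card : ℕ∞)

/-- The arithmetical rank of an ideal. -/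
noncomputable def ara {R : Type*} [CommRing R] (I : Ideal R) : ℕ∞ :=
  ⨅ (s : Finset R) (_ : (Ideal.span (s : Set R)).radical = I.radical), (s.card : ℕ∞)

/-- The labeled path `L_n` with edges `{i, i+1}` (0-indexed). -/
def pathG (n : ℕ) : SimpleGraph (Fin n) :=
  SimpleGraph.fromRel (fun i j => (i : ℕ) + 1 = (j : ℕ))

/-- The labeled cycle `C_n` with edges `{i, i+1}` and `{0, n-1}` (0-indexed). -/
def cycleG (n : ℕ) : SimpleGraph (Fin n) :=
  SimpleGraph.fromRel (fun i j =>
    (i : ℕ) + 1 = (j : ℕ) ∨ ((i : ℕ) = 0 ∧ (j : ℕ) = n - 1))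

/-- The monomial prime ideal generated by the variables with index in `[lo, hi]` (0-indexed). -/
noncomputable def Pvars (n : ℕ) (K : Type*) [Field K] (lo hi : ℕ) :
    Ideal (MvPolynomial (Fin (n + 1)) K) :=
  Ideal.span { f | ∃ i : Fin (n + 1), lo ≤ (i : ℕ) ∧ (i : ℕ) ≤ hi ∧ f = X i }

/-- Greedy normal form of degree `d` and weight `w`. -/
def nf {R : Type*} [CommRing R] (n : ℕ) (y : ℕ → R) : ℕ → ℕ → R
  | 0, _ => 1
  | d + 1, w => y (min w n) * nf n y d (w - n)

lemma swap_many {R : Type*} [CommRing R] (n : ℕ) (y : ℕ → R)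
    (h : ∀ a b, a < n → b < n → y a * y (b + 1) = y b * y (a + 1)) (k : ℕ) :
    ∀ a b, a + k ≤ n → b + k ≤ n → y a * y (b + k) = y b * y (a + k) := by
  induction k with
  | zero => intro a b _ _; simp [mul_comm]
  | succ k ih =>
    intro a b ha hb
    have h1 := h a (b + k) (by omega) (by omega)
    have h2 := ih (a + 1) b (by omega) (by omega)
    rw [← add_assoc, h1, mul_comm, h2]
    congr 2
    omega

lemma nf_mul {R : Type*} [CommRing R] (n : ℕ) (y : ℕ → R)
    (h : ∀ a b, a < n → b < n → y a * y (b + 1) = y b * y (a + 1)) (d : ℕ) :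
    ∀ a w, a ≤ n → w ≤ n * d → y a * nf n y d w = nf n y (d + 1) (w + a) := by
  induction d with
  | zero =>
    intro a w ha hw
    have : w = 0 := by simpa using hw
    subst this
    simp [nf, ha]
  | succ d ih =>
    intro a w ha hw
    rw [Nat.mul_succ] at hw
    by_cases hwn : n ≤ w
    · have e := ih a (w - n) ha (by omega)
      rw [nf, min_eq_right hwn, mul_left_comm, e]
      conv_rhs => rw [nf]
      rw [min_eq_right (by omega)]
      congr 2
      omega
    · push Not at hwn
      rw [nf, nf, nf, ← mul_assoc, ← mul_assoc]
      have e1 : w - n = 0 := by omega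
      have e2 : w + a - n - n = 0 := by omega
      rw [e1, e2]
      congr 1
      by_cases hs : w + a ≤ n
      · have := swap_many n y h a 0 w (by omega) hs
        rw [min_eq_left hwn.le, min_eq_left hs, Nat.sub_eq_zero_of_le hs]
        simp only [zero_add, Nat.zero_min] at this ⊢
        rw [mul_comm (y (w + a)), this, mul_comm]
      · have := swap_many n y h (n - w) (w + a - n) w (by omega) (by omega)
        have e3 : w + (n - w) = n := by omega
        have e4 : w + a - n + (n - w) = a := by omega
        rw [e3, e4] at this
        rw [min_eq_left hwn.le, min_eq_right (by omega), min_eq_left (by omega), mul_comm (y n),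
          this, mul_comm]

lemma hg_mem_IX (n : ℕ) (K : Type*) [Field K] (i j : Fin n) : hg n K i j ∈ IX n K := by
  rcases lt_trichotomy i j with h | h | h
  · exact Ideal.subset_span ⟨i, j, h, by simpa using h.ne, rfl⟩
  · subst h
    simp [hg]
  · have : hg n K i j = - hg n K j i := by simp only [hg]; ring
    rw [this]
    exact neg_mem (Ideal.subset_span ⟨j, i, h, by simpa using h.ne, rfl⟩)

/-- The parametrization `x_i ↦ s t^i`. -/
noncomputable def param (n : ℕ) (K : Type*) [Field K] :
    MvPolynomial (Fin (n + 1)) K →ₐ[K] MvPolynomial (Fin 2) K :=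
  aeval fun i => X 0 * X 1 ^ (i : ℕ)

lemma param_X (n : ℕ) (K : Type*) [Field K] (i : Fin (n + 1)) :
    param n K (X i) = X 0 * X 1 ^ (i : ℕ) := by simp [param]

lemma IX_le_ker (n : ℕ) (K : Type*) [Field K] : IX n K ≤ RingHom.ker (param n K) := by
  refine Ideal.span_le.2 ?_
  rintro _ ⟨i, j, -, -, rfl⟩
  simp only [SetLike.mem_coe, RingHom.mem_ker, hg, map_sub, map_mul, param_X, Fin.val_castSucc,
    Fin.val_succ]
  ring

lemma ker_le_IX (n : ℕ) (K : Type*) [Field K] : RingHom.ker (param n K) ≤ IX n K := by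
  let q := Ideal.Quotient.mkₐ K (IX n K)
  let y : ℕ → (MvPolynomial (Fin (n + 1)) K ⧸ IX n K) := fun k => q (X (Fin.ofNat (n + 1) k))
  have hy : ∀ i : Fin (n + 1), y i = q (X i) := by
    intro i
    simp [y]
  have h : ∀ a b, a < n → b < n → y a * y (b + 1) = y b * y (a + 1) := by
    intro a b ha hb
    have h1 := hy (Fin.castSucc ⟨a, ha⟩)
    have h2 := hy (Fin.castSucc ⟨b, hb⟩)
    have h3 := hy (Fin.succ ⟨a, ha⟩)
    have h4 := hy (Fin.succ ⟨b, hb⟩)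
    simp only [Fin.val_castSucc, Fin.val_succ] at h1 h2 h3 h4
    rw [h1, h2, h3, h4, ← map_mul, ← map_mul]
    exact (Ideal.Quotient.mk_eq_mk_iff_sub_mem _ _).2 (hg_mem_IX n K ⟨a, ha⟩ ⟨b, hb⟩)
  let ψ : MvPolynomial (Fin 2) K →ₗ[K] (MvPolynomial (Fin (n + 1)) K ⧸ IX n K) :=
    (basisMonomials (Fin 2) K).constr K fun m => nf n y (m 0) (m 1)
  have hψ : ∀ d w : ℕ, ψ (X 0 ^ d * X 1 ^ w) = nf n y d w := by
    intro d w
    have : (X 0 ^ d * X 1 ^ w : MvPolynomial (Fin 2) K) =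
        basisMonomials (Fin 2) K (Finsupp.single 0 d + Finsupp.single 1 w) := by
      simp [X_pow_eq_monomial, monomial_mul]
    rw [this, Module.Basis.constr_basis]
    simp
  have key : ∀ s a, ∃ d w : ℕ, ∃ c : K, w ≤ n * d ∧
      param n K (monomial s a) = c • (X 0 ^ d * X 1 ^ w) ∧
      q (monomial s a) = c • nf n y d w := by
    refine induction_on_monomial (motive := fun f => ∃ d w : ℕ, ∃ c : K, w ≤ n * d ∧
      param n K f = c • (X 0 ^ d * X 1 ^ w) ∧ q f = c • nf n y d w) ?_ ?_
    · intro a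
      refine ⟨0, 0, a, by simp, ?_, ?_⟩
      · simp [param, algebraMap_eq, smul_eq_C_mul]
      · have : (C a : MvPolynomial (Fin (n + 1)) K) = algebraMap K _ a := rfl
        rw [this, AlgHom.commutes, nf, Algebra.algebraMap_eq_smul_one]
    · intro p i ih
      obtain ⟨d, w, c, hw, h1, h2⟩ := ih
      refine ⟨d + 1, w + i, c, ?_, ?_, ?_⟩
      · rw [Nat.mul_succ]; have := i.2; omega
      · rw [map_mul, h1, param_X, smul_mul_assoc]
        congr 1
        ring
      · rw [map_mul, h2, ← hy, smul_mul_assoc, mul_comm, nf_mul n y h d i w (by omega) hw]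
  have main : ∀ f, ψ (param n K f) = q f := by
    intro f
    induction f using MvPolynomial.induction_on' with
    | monomial s a =>
      obtain ⟨d, w, c, hw, h1, h2⟩ := key s a
      rw [h1, h2, map_smul, hψ]
    | add p r hp hr => rw [map_add, map_add, map_add, hp, hr]
  intro f hf
  have := main f
  rw [(RingHom.mem_ker).1 hf, map_zero] at this
  exact Ideal.Quotient.eq_zero_iff_mem.1 this.symm

lemma IX_eq_ker (n : ℕ) (K : Type*) [Field K] : IX n K = RingHom.ker (param n K) :=
  le_antisymm (IX_le_ker n K) (ker_le_IX n K)

lemma IX_isPrime (n : ℕ) (K : Type*) [Field K] : (IX n K).IsPrime := by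
  rw [IX_eq_ker]
  exact RingHom.ker_isPrime _

lemma X_notMem_IX (n : ℕ) (K : Type*) [Field K] (i : Fin (n + 1)) : X i ∉ IX n K := by
  rw [IX_eq_ker, RingHom.mem_ker, param_X]
  exact mul_ne_zero (X_ne_zero _) (pow_ne_zero _ (X_ne_zero _))

lemma hg_trans (n : ℕ) (K : Type*) [Field K] (Q : Ideal (MvPolynomial (Fin (n + 1)) K))
    (hQ : Q.IsPrime) (hX : ∀ i, X i ∉ Q) (i j k : Fin n) (h1 : hg n K i j ∈ Q)
    (h2 : hg n K j k ∈ Q) : hg n K i k ∈ Q := by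
  have e : X j.castSucc * hg n K i k =
      X i.castSucc * hg n K j k + X k.castSucc * hg n K i j := by
    simp only [hg]; ring
  have : X j.castSucc * hg n K i k ∈ Q := by
    rw [e]
    exact add_mem (Ideal.mul_mem_left _ _ h2) (Ideal.mul_mem_left _ _ h1)
  exact (hQ.mem_or_mem this).resolve_left (hX _)

lemma hg_symm (n : ℕ) (K : Type*) [Field K] (Q : Ideal (MvPolynomial (Fin (n + 1)) K))
    (i j : Fin n) (h1 : hg n K i j ∈ Q) : hg n K j i ∈ Q := by
  have : hg n K j i = - hg n K i j := by simp only [hg]; ring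
  rw [this]
  exact neg_mem h1

lemma IX_minimal (n : ℕ) (K : Type*) [Field K] (J : Ideal (MvPolynomial (Fin (n + 1)) K))
    (hJ : J ≤ IX n K)
    (h : ∀ Q : Ideal (MvPolynomial (Fin (n + 1)) K), Q.IsPrime → J ≤ Q → (∀ i, X i ∉ Q) →
      ∀ i j, hg n K i j ∈ Q) : IX n K ∈ J.minimalPrimes := by
  refine ⟨⟨IX_isPrime n K, hJ⟩, ?_⟩
  rintro Q ⟨hQ, hJQ⟩ hQI
  refine Ideal.span_le.2 ?_
  rintro _ ⟨i, j, -, -, rfl⟩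
  exact h Q hQ hJQ (fun i hi => X_notMem_IX n K i (hQI hi)) i j

lemma IX_height (n : ℕ) (K : Type*) [Field K] (hn : 1 ≤ n) :
    (IX n K).height ≤ ((n - 1 : ℕ) : ℕ∞) := by
  classical
  let o : Fin n := ⟨0, hn⟩
  let s : Finset (MvPolynomial (Fin (n + 1)) K) := (Finset.univ.erase o).image (hg n K o)
  have hmin : IX n K ∈ (Ideal.span (s : Set (MvPolynomial (Fin (n + 1)) K))).minimalPrimes := by
    refine IX_minimal n K _ ?_ ?_
    · refine Ideal.span_le.2 ?_
      intro f hf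
      simp only [s, Finset.coe_image, Set.mem_image] at hf
      obtain ⟨j, -, rfl⟩ := hf
      exact hg_mem_IX n K o j
    · intro Q hQ hJQ hX
      have h0 : ∀ j, hg n K o j ∈ Q := by
        intro j
        by_cases hj : j = o
        · subst hj
          simp [hg]
        · refine hJQ (Ideal.subset_span ?_)
          simp only [s, Finset.coe_image, Set.mem_image]
          exact ⟨j, by simp [hj], rfl⟩
      intro i j
      exact hg_trans n K Q hQ hX i o j (hg_symm n K Q _ _ (h0 i)) (h0 j)
  refine (Ideal.height_le_card_of_mem_minimalPrimes_span_finset hmin).trans ?_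
  have : s.card ≤ n - 1 := by
    refine Finset.card_image_le.trans ?_
    simp
  exact_mod_cast this

/-- For a connected graph `G` on `[n]`, `I_X` is a minimal prime of
`I_G`, and consequently `height I_G ≤ n - 1`. -/
theorem stmt_0 (n : ℕ) (K : Type*) [Field K] (hn : 1 ≤ n)
    (G : SimpleGraph (Fin n)) (hG : G.Connected) :
    IX n K ∈ (hankelIdeal n K G).minimalPrimes ∧
      ht (hankelIdeal n K G) ≤ ((n - 1 : ℕ) : ℕ∞) := by
  have hle : hankelIdeal n K G ≤ IX n K := by
    refine Ideal.span_le.2 ?_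
    rintro _ ⟨i, j, -, -, rfl⟩
    exact hg_mem_IX n K i j
  refine ⟨IX_minimal n K _ hle ?_, ?_⟩
  · intro Q hQ hJQ hX i j
    have hadj : ∀ a b, G.Adj a b → hg n K a b ∈ Q := by
      intro a b hab
      rcases lt_trichotomy a b with h | h | h
      · exact hJQ (Ideal.subset_span ⟨a, b, h, hab, rfl⟩)
      · exact absurd h hab.ne
      · exact hg_symm n K Q _ _ (hJQ (Ideal.subset_span ⟨b, a, h, hab.symm, rfl⟩))
    obtain ⟨p⟩ := hG.preconnected i j
    induction p with
    | nil => simp [hg]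
    | cons hab _ ih => exact hg_trans n K Q hQ hX _ _ _ (hadj _ _ hab) ih
  · refine (iInf₂_le (⟨IX n K, IX_isPrime n K⟩ : PrimeSpectrum _) hle).trans ?_
    rw [← PrimeSpectrum.height_eq_orderHeight]
    exact IX_height n K hn
end

section
/- Let G be a connected labeled semi-Hamiltonian graph on vertex set [n]. Then S/I_G is a complete intersection if and only if G = L_n, the path with edges {i,i+1} for i=1,...,n-1. -/
open MvPolynomial

section Helpers

lemma hk_chain {R : Type*} [CommRing R] (Q : ℕ → PrimeSpectrum R) (m : ℕ)
    (h : ∀ k < m, Q k < Q (k + 1)) : (m : ℕ∞) ≤ Order.height (Q m) := by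
  induction m with
  | zero => simp
  | succ m ih =>
    have h1 := ih (fun k hk => h k (by omega))
    have h2 := Order.height_add_one_le (h m (by omega))
    push_cast
    exact (add_le_add_left h1 1).trans h2

lemma hk_kerchain {R : Type*} [CommRing R] [IsDomain R] (φ ψ : ℕ → (R →+* R)) (w : ℕ → R) (m : ℕ)
    (hc : ∀ k < m, φ (k + 1) = (ψ k).comp (φ k))
    (h0 : ∀ k < m, φ (k + 1) (w k) = 0) (h1 : ∀ k < m, φ k (w k) ≠ 0)
    (p : PrimeSpectrum R) (hp : RingHom.ker (φ m) ≤ p.asIdeal) :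
    (m : ℕ∞) ≤ Order.height p := by
  have := hk_chain (fun k => (⟨RingHom.ker (φ k), RingHom.ker_isPrime _⟩ : PrimeSpectrum R)) m ?_
  · exact this.trans (Order.height_mono hp)
  · intro k hk
    rw [← PrimeSpectrum.asIdeal_lt_asIdeal]
    refine lt_of_le_of_ne ?_ ?_
    · intro x hx
      simp only [RingHom.mem_ker] at hx ⊢
      rw [hc k hk]; simp [hx]
    · intro he
      have : w k ∈ RingHom.ker (φ (k+1)) := h0 k hk
      exact h1 k hk ((he.symm.le this : w k ∈ RingHom.ker (φ k)))

lemma hk_ht_le {R : Type*} [CommRing R] [IsNoetherianRing R] (I : Ideal R) (s : Finset R)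
    (h : I ≤ Ideal.span (s : Set R)) (hs : Ideal.span (s : Set R) ≠ ⊤) :
    ht I ≤ s.card := by
  obtain ⟨p, hp⟩ := Ideal.nonempty_minimalPrimes hs
  have hpp := hp.isPrime
  have := Ideal.height_le_card_of_mem_minimalPrimes_span_finset hp
  refine (iInf₂_le (⟨p, hpp⟩ : PrimeSpectrum R) (h.trans hp.1.2)).trans ?_
  rw [← PrimeSpectrum.height_eq_orderHeight]
  exact this

lemma hk_geom {L : Type*} [Field L] (n : ℕ) (y : ℕ → L) (h0 : ∀ i ≤ n, y i ≠ 0)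
    (h : ∀ i, i + 2 ≤ n → y i * y (i + 2) = y (i + 1) ^ 2) :
    ∀ i ≤ n, y i = y 0 * (y 1 / y 0) ^ i := by
  have key : ∀ i, i + 1 ≤ n → y (i + 1) * y 0 = y i * y 1 := by
    intro i
    induction i with
    | zero => intro _; ring
    | succ i ih =>
      intro hi
      have a := ih (by omega)
      have b := h i (by omega)
      apply mul_left_cancel₀ (h0 i (by omega))
      linear_combination (y 0) * b + y (i + 1) * a
  intro i
  induction i with
  | zero => intro _; simp
  | succ i ih =>
    intro hi
    have a := key i hi
    have b := ih (by omega)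
    have c := h0 0 (by omega)
    rw [pow_succ, ← mul_assoc, ← b]
    field_simp
    linear_combination a

lemma hk_prop (n : ℕ) (P : ℕ → Prop) (hu : ∀ i, i + 2 ≤ n → P i → P (i + 1))
    (hd : ∀ i, i + 2 ≤ n → P (i + 2) → P (i + 1)) (i : ℕ) (hi : i ≤ n) (h : P i) :
    ∀ j, 1 ≤ j → j + 1 ≤ n → P j := by
  intro j h1 h2
  rcases le_total i j with hij | hij
  · obtain ⟨d, rfl⟩ := Nat.exists_eq_add_of_le hij
    clear hij h1
    induction d with
    | zero => exact h
    | succ d ih => exact hu (i + d) (by omega) (ih (by omega))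
  · obtain ⟨d, rfl⟩ := Nat.exists_eq_add_of_le hij
    clear hij
    induction d generalizing j with
    | zero => exact h
    | succ d ih =>
      obtain ⟨j, rfl⟩ : ∃ k, j = k + 1 := ⟨j - 1, by omega⟩
      by_cases hj : j + 3 ≤ n
      · refine hd j (by omega) (ih (j + 2) (by omega) (by omega) ?_ ?_)
        · omega
        · rwa [show j + 2 + d = j + 1 + (d + 1) by omega]
      · have : j + 1 + (d + 1) = j + 2 := by omega
        rw [this] at h
        exact hd j (by omega) h

variable {K : Type*} [Field K] {n : ℕ}

lemma hk_varheight (p : PrimeSpectrum (MvPolynomial (Fin (n + 1)) K))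
    (hp : ∀ i : Fin (n + 1), 1 ≤ (i : ℕ) → (i : ℕ) + 1 ≤ n → X i ∈ p.asIdeal) :
    ((n - 1 : ℕ) : ℕ∞) ≤ Order.height p := by
  classical
  refine hk_kerchain
    (fun k => (aeval (R := K) (fun i : Fin (n + 1) => if 1 ≤ (i : ℕ) ∧ (i : ℕ) ≤ k then
      (0 : MvPolynomial (Fin (n + 1)) K) else X i)).toRingHom)
    (fun k => (aeval (R := K) (fun i : Fin (n + 1) => if (i : ℕ) = k + 1 then
      (0 : MvPolynomial (Fin (n + 1)) K) else X i)).toRingHom)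
    (fun k => if h : k + 1 < n + 1 then X ⟨k + 1, h⟩ else 0) (n - 1) ?_ ?_ ?_ p ?_
  · intro k hk
    apply MvPolynomial.ringHom_ext
    · intro a; simp
    · intro i
      simp only [AlgHom.toRingHom_eq_coe, RingHom.coe_coe, RingHom.comp_apply, aeval_X]
      by_cases h : 1 ≤ (i : ℕ) ∧ (i : ℕ) ≤ k
      · rw [if_pos h, if_pos (by omega)]; simp
      · rw [if_neg h, aeval_X]
        congr 1
        simp only [eq_iff_iff]
        omega
  · intro k hk
    rw [dif_pos (by omega)]
    simp
  · intro k hk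
    rw [dif_pos (by omega)]
    simp
  · intro f hf
    have : (aeval (R := K) (fun i : Fin (n + 1) => Ideal.Quotient.mk p.asIdeal (X i))).comp
        (aeval (R := K) (fun i : Fin (n + 1) => if 1 ≤ (i : ℕ) ∧ (i : ℕ) ≤ n - 1 then
      (0 : MvPolynomial (Fin (n + 1)) K) else X i)) = Ideal.Quotient.mkₐ K p.asIdeal := by
      apply MvPolynomial.algHom_ext
      intro i
      simp only [AlgHom.comp_apply, aeval_X, Ideal.Quotient.mkₐ_eq_mk]
      split_ifs with h
      · rw [map_zero, eq_comm, Ideal.Quotient.eq_zero_iff_mem]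
        exact hp i h.1 (by omega)
      · simp
    rw [← Ideal.Quotient.eq_zero_iff_mem]
    have h2 := congrArg (fun g => g f) this
    simp only [AlgHom.comp_apply, Ideal.Quotient.mkₐ_eq_mk] at h2
    rw [← h2]
    have h3 : (aeval (R := K) (fun i : Fin (n + 1) => if 1 ≤ (i : ℕ) ∧ (i : ℕ) ≤ n - 1 then
      (0 : MvPolynomial (Fin (n + 1)) K) else X i)) f = 0 := hf
    rw [h3, map_zero]

lemma hk_toricheight (hn : 2 ≤ n) (p : PrimeSpectrum (MvPolynomial (Fin (n + 1)) K))
    (hp : ∀ i : Fin (n + 1), X i ∉ p.asIdeal)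
    (hI : ∀ i (h : i + 2 ≤ n), (X ⟨i, by omega⟩ * X ⟨i + 2, by omega⟩ - X ⟨i + 1, by omega⟩ ^ 2 :
      MvPolynomial (Fin (n + 1)) K) ∈ p.asIdeal) :
    ((n - 1 : ℕ) : ℕ∞) ≤ Order.height p := by
  classical
  let X0 : MvPolynomial (Fin (n + 1)) K := X ⟨0, by omega⟩
  let X1 : MvPolynomial (Fin (n + 1)) K := X ⟨1, by omega⟩
  refine hk_kerchain
    (fun k => (aeval (R := K) (fun i : Fin (n + 1) => if (i : ℕ) ≤ k + 1 then
      X0 * X1 ^ (i : ℕ) else X i)).toRingHom)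
    (fun k => (aeval (R := K) (fun i : Fin (n + 1) => if (i : ℕ) = k + 2 then
      X0 * X1 ^ (i : ℕ) else X i)).toRingHom)
    (fun k => if h : k + 2 < n + 1 then
      X ⟨k, by omega⟩ * X ⟨k + 2, by omega⟩ - X ⟨k + 1, by omega⟩ ^ 2 else 0) (n - 1) ?_ ?_ ?_ p ?_
  · intro k hk
    apply MvPolynomial.ringHom_ext
    · intro a; simp
    · intro i
      simp only [AlgHom.toRingHom_eq_coe, RingHom.coe_coe, RingHom.comp_apply, aeval_X]
      by_cases h : (i : ℕ) ≤ k + 1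
      · rw [if_pos h, if_pos (by omega)]; simp [X0, X1]
      · rw [if_neg h, aeval_X]
        congr 1
        simp only [eq_iff_iff]
        omega
  · intro k hk
    rw [dif_pos (by omega)]
    simp only [AlgHom.toRingHom_eq_coe, RingHom.coe_coe, map_sub, map_mul, map_pow, aeval_X]
    rw [if_pos (by omega), if_pos (by omega), if_pos (by omega)]
    ring
  · intro k hk
    rw [dif_pos (by omega)]
    intro h
    have h2 := congrArg (MvPolynomial.eval (fun i : Fin (n + 1) =>
      if (i : ℕ) = k + 2 then (0 : K) else 1)) h
    simp [X0, X1] at h2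
  · intro f hf
    let L := FractionRing (MvPolynomial (Fin (n + 1)) K ⧸ p.asIdeal)
    let χ : MvPolynomial (Fin (n + 1)) K →ₐ[K] L :=
      (IsScalarTower.toAlgHom K (MvPolynomial (Fin (n + 1)) K ⧸ p.asIdeal) L).comp
        (Ideal.Quotient.mkₐ K p.asIdeal)
    have hχ : ∀ g, χ g = 0 ↔ g ∈ p.asIdeal := by
      intro g
      simp only [χ, AlgHom.comp_apply, IsScalarTower.coe_toAlgHom', Ideal.Quotient.mkₐ_eq_mk]
      rw [IsFractionRing.to_map_eq_zero_iff, Ideal.Quotient.eq_zero_iff_mem]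
    let y : ℕ → L := fun i => if h : i < n + 1 then χ (X ⟨i, h⟩) else 0
    have hy : ∀ i (h : i < n + 1), y i = χ (X ⟨i, h⟩) := fun i h => by simp only [y, dif_pos h]
    have hg := hk_geom n y (fun i hi => by
        rw [hy i (by omega), Ne, hχ]; exact hp _)
      (fun i hi => by
        have := (hχ _).2 (hI i hi)
        rw [map_sub, map_mul, map_pow] at this
        rw [hy i (by omega), hy (i+1) (by omega), hy (i+2) (by omega)]
        exact sub_eq_zero.1 this)
    have : (aeval (R := K) (fun i : Fin (n + 1) =>
        if (i : ℕ) = 1 then y 1 / y 0 else y i)).comp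
        (aeval (R := K) (fun i : Fin (n + 1) => if (i : ℕ) ≤ n - 1 + 1 then
      X0 * X1 ^ (i : ℕ) else X i)) = χ := by
      apply MvPolynomial.algHom_ext
      intro i
      simp only [AlgHom.comp_apply, aeval_X]
      rw [if_pos (by omega)]
      simp only [X0, X1, map_mul, map_pow, aeval_X]
      have := hg i (by omega)
      rw [hy i i.2] at this
      simp only [Fin.eta] at this
      rw [this]; simp
    rw [← hχ, ← this, AlgHom.comp_apply]
    have h3 : (aeval (R := K) (fun i : Fin (n + 1) => if (i : ℕ) ≤ n - 1 + 1 then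
      X0 * X1 ^ (i : ℕ) else X i)) f = 0 := hf
    rw [h3, map_zero]

lemma hk_path_mem (G : SimpleGraph (Fin n)) (hpath : pathG n ≤ G) (i : ℕ) (h : i + 2 ≤ n) :
    (X ⟨i, by omega⟩ * X ⟨i + 2, by omega⟩ - X ⟨i + 1, by omega⟩ ^ 2 :
      MvPolynomial (Fin (n + 1)) K) ∈ hankelIdeal n K G := by
  apply Ideal.subset_span
  refine ⟨⟨i, by omega⟩, ⟨i + 1, by omega⟩, by simp, ?_, ?_⟩
  · apply hpath
    simp [pathG]
  · simp [hg, pow_two]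

lemma hk_ht_ge (hn : 2 ≤ n) (G : SimpleGraph (Fin n)) (hpath : pathG n ≤ G) :
    ((n - 1 : ℕ) : ℕ∞) ≤ ht (hankelIdeal n K G) := by
  refine le_iInf₂ fun p hp => ?_
  have hI := fun i h => hp (hk_path_mem (K := K) G hpath i h)
  by_cases hx : ∀ i : Fin (n + 1), X i ∉ p.asIdeal
  · exact hk_toricheight hn p hx hI
  · push Not at hx
    obtain ⟨i, hi⟩ := hx
    apply hk_varheight
    have := hk_prop n (fun j => ∀ h : j < n + 1, (X ⟨j, h⟩ : MvPolynomial (Fin (n + 1)) K) ∈ p.asIdeal)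
      (fun j hj hP h => by
        have h1 := hI j hj
        have h2 := hP (by omega)
        apply p.2.mem_of_pow_mem 2
        have h3 := p.asIdeal.sub_mem (p.asIdeal.mul_mem_right (X ⟨j + 2, by omega⟩) h2) h1
        simpa using h3)
      (fun j hj hP h => by
        have h1 := hI j hj
        have h2 := hP (by omega)
        apply p.2.mem_of_pow_mem 2
        have h3 := p.asIdeal.sub_mem (p.asIdeal.mul_mem_left (X ⟨j, by omega⟩) h2) h1
        simpa using h3) i (by omega) (fun _ => hi)
    intro j h1 h2
    exact this j h1 h2 j.2

lemma hk_span_ne_top (s : Set (MvPolynomial (Fin (n + 1)) K))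
    (hs : ∀ f ∈ s, constantCoeff f = 0) : Ideal.span s ≠ ⊤ := by
  have h1 : Ideal.span s ≤ RingHom.ker (constantCoeff (R := K) (σ := Fin (n + 1))) :=
    Ideal.span_le.2 hs
  intro h
  rw [h] at h1
  exact RingHom.ker_ne_top _ (top_le_iff.1 h1)

lemma hk_ht_upper (G : SimpleGraph (Fin n))
    (hne : ∀ i j : Fin n, (i : ℕ) = 0 → (j : ℕ) = n - 1 → ¬ G.Adj i j) :
    ht (hankelIdeal n K G) ≤ ((n - 1 : ℕ) : ℕ∞) := by
  classical
  let v : Fin (n - 1) → MvPolynomial (Fin (n + 1)) K := fun k => X ⟨k + 1, by omega⟩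
  let s : Finset (MvPolynomial (Fin (n + 1)) K) := Finset.univ.image v
  have hX : ∀ i : Fin (n + 1), 1 ≤ (i : ℕ) → (i : ℕ) + 1 ≤ n →
      (X i : MvPolynomial (Fin (n + 1)) K) ∈ Ideal.span (s : Set (MvPolynomial (Fin (n + 1)) K)) := by
    intro i h1 h2
    apply Ideal.subset_span
    simp only [s, Finset.coe_image, Finset.coe_univ, Set.image_univ]
    refine ⟨⟨i - 1, by omega⟩, ?_⟩
    simp only [v]
    congr 1
    ext; simp; omega
  refine (hk_ht_le _ s ?_ ?_).trans ?_
  · refine Ideal.span_le.2 ?_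
    rintro _ ⟨i, j, hij, ha, rfl⟩
    have hij' : (i : ℕ) < j := hij
    refine Ideal.sub_mem _ ?_ (Ideal.mul_mem_right _ _ (hX _ ?_ ?_))
    · by_cases hi : (i : ℕ) = 0
      · apply Ideal.mul_mem_left _ _ (hX _ (by simp) _)
        have : (j : ℕ) ≠ n - 1 := by
          intro hj
          exact hne i j hi hj ha
        simp; omega
      · apply Ideal.mul_mem_right _ _ (hX _ _ _) <;> simp <;> omega
    · simp; omega
    · simp
  · apply hk_span_ne_top
    intro f hf
    simp only [s, Finset.coe_image, Finset.coe_univ, Set.image_univ] at hf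
    obtain ⟨k, rfl⟩ := hf
    simp [v]
  · have : s.card ≤ n - 1 := by simpa using Finset.card_image_le (s := Finset.univ) (f := v)
    exact_mod_cast this

lemma hk_ne_top (G : SimpleGraph (Fin n)) : hankelIdeal n K G ≠ ⊤ := by
  apply hk_span_ne_top
  rintro _ ⟨i, j, -, -, rfl⟩
  simp [hg]

lemma hk_mu_path (hn : 2 ≤ n) : mu (hankelIdeal n K (pathG n)) ≤ ((n - 1 : ℕ) : ℕ∞) := by
  classical
  let v : Fin (n - 1) → MvPolynomial (Fin (n + 1)) K := fun k =>
    hg n K ⟨k, by omega⟩ ⟨k + 1, by omega⟩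
  let s : Finset (MvPolynomial (Fin (n + 1)) K) := Finset.univ.image v
  refine (iInf₂_le s ?_).trans ?_
  · unfold hankelIdeal
    congr 1
    ext f
    simp only [s, Finset.coe_image, Finset.coe_univ, Set.image_univ]
    constructor
    · rintro ⟨k, rfl⟩
      refine ⟨_, _, ?_, ?_, rfl⟩
      · simp
      · simp [pathG]
    · rintro ⟨i, j, hij, ha, rfl⟩
      have hij' : (i : ℕ) < j := hij
      simp only [pathG, SimpleGraph.fromRel_adj] at ha
      have : (j : ℕ) = i + 1 := by omega
      refine ⟨⟨i, by omega⟩, ?_⟩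
      simp only [v]
      congr 1
      ext; simp [this]
  · have : s.card ≤ n - 1 := by simpa using Finset.card_image_le (s := Finset.univ) (f := v)
    exact_mod_cast this

lemma hk_coeff_mul {σ : Type*} (m : σ →₀ ℕ) (hm : m.degree = 2) (r f : MvPolynomial σ K)
    (hf : ∀ u : σ →₀ ℕ, u.degree < 2 → coeff u f = 0) :
    coeff m (r * f) = coeff 0 r * coeff m f := by
  classical
  rw [coeff_mul, Finset.sum_eq_single (0, m)]
  · rintro ⟨a, b⟩ hab hne
    rw [Finset.HasAntidiagonal.mem_antidiagonal] at hab
    simp only at hab ⊢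
    rw [hf b, mul_zero]
    have h1 : a.degree + b.degree = 2 := by rw [← hm, ← hab, map_add]
    have h2 : a.degree ≠ 0 := by
      rw [Ne, Finsupp.degree_eq_zero_iff]
      rintro rfl
      apply hne
      simpa using hab
    omega
  · intro h
    simp at h

lemma hk_card_le {σ ι : Type*} [Fintype ι] [DecidableEq ι] (M : ι → σ →₀ ℕ) (g : ι → MvPolynomial σ K)
    (hM : ∀ a, (M a).degree = 2)
    (hd : ∀ a b, coeff (M a) (g b) = if a = b then 1 else 0)
    (I : Ideal (MvPolynomial σ K)) (hI : I ≤ idealOfVars σ K ^ 2)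
    (hg : ∀ a, g a ∈ I) (s : Finset (MvPolynomial σ K)) (hs : Ideal.span (s : Set _) = I) :
    Fintype.card ι ≤ s.card := by
  classical
  let Λ : MvPolynomial σ K → (ι → K) := fun f a => coeff (M a) f
  have hmem : ∀ f ∈ I, Λ f ∈ Submodule.span K ((s.image Λ : Finset (ι → K)) : Set (ι → K)) := by
    intro f hf
    rw [← hs] at hf
    induction hf using Submodule.span_induction with
    | mem x hx =>
      apply Submodule.subset_span
      simp only [Finset.coe_image]
      exact ⟨x, hx, rfl⟩
    | zero =>
      have : Λ 0 = 0 := by ext; simp [Λ]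
      rw [this]; exact Submodule.zero_mem _
    | add x y _ _ hx hy =>
      have : Λ (x + y) = Λ x + Λ y := by ext; simp [Λ]
      rw [this]; exact Submodule.add_mem _ hx hy
    | smul r x hx' hx =>
      have : Λ (r • x) = coeff 0 r • Λ x := by
        ext a
        simp only [Λ, smul_eq_mul, Pi.smul_apply]
        apply hk_coeff_mul _ (hM a)
        apply (mem_pow_idealOfVars_iff' 2 x).1
        apply hI
        rw [← hs]; exact hx'
      rw [this]; exact Submodule.smul_mem _ _ hx
  have htop : Submodule.span K ((s.image Λ : Finset (ι → K)) : Set (ι → K)) = ⊤ := by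
    rw [eq_top_iff, ← (Pi.basisFun K ι).span_eq, Submodule.span_le]
    rintro _ ⟨b, rfl⟩
    have := hmem (g b) (hg b)
    have he : (Pi.basisFun K ι) b = Λ (g b) := by
      ext a
      simp [Λ, hd, Pi.single_apply]
    rw [he]
    exact this
  have h1 := finrank_span_finset_le_card (R := K) (s.image Λ)
  rw [Set.finrank, htop, finrank_top, Module.finrank_fintype_fun_eq_card] at h1
  exact h1.trans Finset.card_image_le

lemma hk_coeff_XX {σ : Type*} [DecidableEq σ] (a b c d : σ) :
    coeff (Finsupp.single a 1 + Finsupp.single b 1) (X c * X d : MvPolynomial σ K) =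
      if (c = a ∧ d = b) ∨ (c = b ∧ d = a) then 1 else 0 := by
  rw [X, X, monomial_mul, coeff_monomial, mul_one]
  congr 1
  rw [Finsupp.single_add_single_eq_single_add_single one_ne_zero one_ne_zero]
  simp

lemma hk_le_sq (G : SimpleGraph (Fin n)) :
    hankelIdeal n K G ≤ idealOfVars (Fin (n + 1)) K ^ 2 := by
  refine Ideal.span_le.2 ?_
  rintro _ ⟨i, j, -, -, rfl⟩
  have hX : ∀ i : Fin (n + 1), (X i : MvPolynomial (Fin (n + 1)) K) ∈ idealOfVars (Fin (n + 1)) K :=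
    fun i => Ideal.subset_span ⟨i, rfl⟩
  rw [pow_two]
  exact Ideal.sub_mem _ (Ideal.mul_mem_mul (hX _) (hX _)) (Ideal.mul_mem_mul (hX _) (hX _))

lemma hk_mu_ge (hn : 2 ≤ n) (G : SimpleGraph (Fin n)) (hpath : pathG n ≤ G)
    (hG : G ≠ pathG n) : (n : ℕ∞) ≤ mu (hankelIdeal n K G) := by
  classical
  obtain ⟨a, b, hab, hadj⟩ : ∃ a b : Fin n, (a : ℕ) + 2 ≤ b ∧ G.Adj a b := by
    by_contra hcon
    push Not at hcon
    apply hG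
    refine le_antisymm ?_ hpath
    intro i j hij
    have h1 := hcon i j
    have h2 := hcon j i
    have h3 : (i : ℕ) ≠ j := fun h => hij.ne (Fin.ext h)
    simp only [pathG, SimpleGraph.fromRel_adj]
    refine ⟨hij.ne, ?_⟩
    by_contra hc
    rcases lt_or_gt_of_ne h3 with h | h
    · exact h1 (by omega) hij
    · exact h2 (by omega) hij.symm
  refine le_iInf₂ fun s hs => ?_
  let M : Option (Fin (n - 1)) → Fin (n + 1) →₀ ℕ := fun o => match o with
    | none => Finsupp.single a.castSucc 1 + Finsupp.single b.succ 1
    | some k => Finsupp.single ⟨k + 1, by omega⟩ 1 + Finsupp.single ⟨k + 1, by omega⟩ 1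
  let g : Option (Fin (n - 1)) → MvPolynomial (Fin (n + 1)) K := fun o => match o with
    | none => hg n K a b
    | some k => - hg n K ⟨k, by omega⟩ ⟨k + 1, by omega⟩
  have := hk_card_le M g ?_ ?_ (hankelIdeal n K G) (hk_le_sq G) ?_ s hs
  · have h2 : Fintype.card (Option (Fin (n - 1))) = n := by simp; omega
    rw [h2] at this
    exact_mod_cast this
  · rintro (_ | k) <;> simp [M]
  · rintro (_ | k) (_ | l)
    · simp only [M, g, hg, coeff_sub, hk_coeff_XX, Fin.ext_iff, Fin.val_castSucc, Fin.val_succ]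
      rw [if_pos (Or.inl ⟨trivial, trivial⟩), if_neg (by omega)]; simp
    · simp only [M, g, hg, coeff_sub, coeff_neg, hk_coeff_XX, Fin.ext_iff, Fin.val_castSucc, Fin.val_succ]
      rw [if_neg (by omega), if_neg (by omega)]; simp
    · simp only [M, g, hg, coeff_sub, hk_coeff_XX, Fin.ext_iff, Fin.val_castSucc, Fin.val_succ]
      rw [if_neg (by omega), if_neg (by omega)]; simp
    · simp only [M, g, hg, coeff_sub, coeff_neg, hk_coeff_XX, Fin.ext_iff, Fin.val_castSucc, Fin.val_succ,
        Option.some.injEq]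
      rw [if_neg (by omega)]
      by_cases h : (k : ℕ) = l
      · rw [if_pos (by omega), if_pos h]; simp
      · rw [if_neg (by omega), if_neg h]; simp
  · rintro (_ | k)
    · exact Ideal.subset_span ⟨a, b, by rw [Fin.lt_def]; omega, hadj, rfl⟩
    · refine Ideal.neg_mem_iff _ |>.2 (Ideal.subset_span ⟨_, _, ?_, hpath ?_, rfl⟩)
      · simp
      · simp [pathG]

end Helpers

/-- For a connected labeled semi-Hamiltonian graph `G` on `[n]`,
`S/I_G` is a complete intersection iff `G = L_n`. -/
theorem stmt_8 (n : ℕ) (K : Type*) [Field K] (hn : 2 ≤ n)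
    (G : SimpleGraph (Fin n)) (hG : G.Connected) (hpath : pathG n ≤ G)
    (hne : ¬ G.Adj ⟨0, by omega⟩ ⟨n - 1, by omega⟩) :
    mu (hankelIdeal n K G) = ht (hankelIdeal n K G) ↔ G = pathG n := by
  constructor
  · intro h
    by_contra hGp
    have h1 := hk_mu_ge (K := K) hn G hpath hGp
    have h2 := hk_ht_upper (K := K) G (by
      intro i j hi hj ha
      apply hne
      convert ha
      · exact hi.symm
      · exact hj.symm)
    rw [h] at h1
    have h3 : n ≤ n - 1 := by exact_mod_cast h1.trans h2
    omega
  · rintro rfl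
    refine le_antisymm ((hk_mu_path hn).trans (hk_ht_ge hn _ le_rfl)) ?_
    refine le_iInf₂ fun s hs => ?_
    exact hk_ht_le _ s hs.ge (by rw [hs]; exact hk_ne_top _)
end

section
/- Let G be a connected labeled Hamiltonian or labeled semi-Hamiltonian graph on vertex set [n]. Then the arithmetical rank of I_G equals n-1; in particular, I_G is a set-theoretic complete intersection. -/
open MvPolynomial

namespace Hank

lemma dich {F : Type*} [Field F] (n : ℕ) (a : ℕ → F)
    (h : ∀ i, i + 2 ≤ n → a i * a (i + 2) = a (i + 1) ^ 2) :
    (∀ j, 1 ≤ j → j < n → a j = 0) ∨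
      (a 0 ≠ 0 ∧ ∀ j, j ≤ n → a j = a 0 * (a 1 / a 0) ^ j) := by
  by_cases h0 : a 0 = 0 ∨ a 1 = 0
  · left
    have key : ∀ j, j + 1 < n → a (j + 1) = 0 := by
      intro j
      induction j with
      | zero =>
        intro hj
        rcases h0 with h0 | h0
        · have := h 0 (by omega)
          rw [h0, zero_mul] at this
          exact pow_eq_zero_iff (two_ne_zero) |>.1 this.symm
        · exact h0
      | succ j ih =>
        intro hj
        have := h (j + 1) (by omega)
        rw [ih (by omega), zero_mul] at this
        exact pow_eq_zero_iff (two_ne_zero) |>.1 this.symm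
    intro j h1 h2
    obtain ⟨k, rfl⟩ : ∃ k, j = k + 1 := ⟨j - 1, by omega⟩
    exact key k h2
  · right
    push Not at h0
    obtain ⟨h0, h1⟩ := h0
    refine ⟨h0, ?_⟩
    have key : ∀ j, j + 1 ≤ n → a j = a 0 * (a 1 / a 0) ^ j ∧
        a (j + 1) = a 0 * (a 1 / a 0) ^ (j + 1) := by
      intro j
      induction j with
      | zero =>
        intro _
        refine ⟨by simp, ?_⟩
        rw [zero_add, pow_one, mul_div_cancel₀ _ h0]
      | succ j ih =>
        intro hj
        obtain ⟨e1, e2⟩ := ih (by omega)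
        refine ⟨e2, ?_⟩
        have hne : a j ≠ 0 := by
          rw [e1]; exact mul_ne_zero h0 (pow_ne_zero _ (div_ne_zero h1 h0))
        apply mul_left_cancel₀ hne
        rw [h j (by omega), e2, e1]
        ring
    intro j hj
    rcases j with _ | j
    · simp
    · exact (key j hj).2

/-- The Robbiano-Valla / Verdi polynomials. -/
def rv {R : Type*} [CommRing R] (a : ℕ → R) (i : ℕ) : R :=
  ∑ α ∈ Finset.range (i + 1),
    (-1) ^ α * (i.choose α : R) * a α * a i ^ α * a (i + 1) ^ (i - α)

lemma rv_map {R S : Type*} [CommRing R] [CommRing S] (θ : R →+* S) (a : ℕ → R) (i : ℕ) :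
    θ (rv a i) = rv (fun j => θ (a j)) i := by
  simp [rv, map_sum]

lemma rv_geo {F : Type*} [CommRing F] (a : ℕ → F) (i : ℕ) (c u : F)
    (h : ∀ j, j ≤ i → a j = c * u ^ j) :
    rv a i = c * (-(u * a i) + a (i + 1)) ^ i := by
  rw [add_pow, Finset.mul_sum, rv]
  apply Finset.sum_congr rfl
  intro α hα
  rw [h α (by simpa [Nat.lt_succ_iff] using hα), neg_pow (u * a i), mul_pow]
  ring

lemma rv_zero {F : Type*} [CommRing F] (a : ℕ → F) (i : ℕ)
    (h : ∀ j, j < i → a j = 0) :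
    rv a i = (-1) ^ i * a i ^ (i + 1) := by
  rw [rv, Finset.sum_range_succ, Finset.sum_eq_zero]
  · simp; ring
  · intro α hα
    rw [h α (by simpa using hα)]; ring

lemma rv_curve {F : Type*} [Field F] (n : ℕ) (a : ℕ → F)
    (h : ∀ i, 1 ≤ i → i < n → rv a i = 0) :
    (∀ j, j < n → a j = 0) ∨
      (a 0 ≠ 0 ∧ ∀ j, j ≤ n → a j = a 0 * (a 1 / a 0) ^ j) := by
  by_cases h0 : a 0 = 0
  · left
    intro j
    induction j using Nat.strong_induction_on with
    | _ j ih =>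
      intro hj
      rcases Nat.eq_zero_or_pos j with rfl | hpos
      · exact h0
      · have := h j hpos hj
        rw [rv_zero a j (fun k hk => ih k hk (by omega))] at this
        simpa using this
  · right
    refine ⟨h0, ?_⟩
    intro j
    induction j using Nat.strong_induction_on with
    | _ j ih =>
      intro hj
      rcases j with _ | _ | j
      · simp
      · rw [zero_add, pow_one, mul_div_cancel₀ _ h0]
      · have := h (j + 1) (by omega) (by omega)
        rw [rv_geo a (j + 1) (a 0) (a 1 / a 0) (fun k hk => ih k (by omega) (by omega))] at this
        have h2 : -(a 1 / a 0 * a (j + 1)) + a (j + 1 + 1) = 0 := by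
          rcases mul_eq_zero.1 this with h | h
          · exact absurd h h0
          · exact (pow_eq_zero_iff (by omega)).1 h
        rw [ih (j + 1) (by omega) (by omega)] at h2
        linear_combination h2

/-- Variables indexed by naturals. -/
noncomputable def xv (n : ℕ) (K : Type*) [Field K] (j : ℕ) : MvPolynomial (Fin (n + 1)) K :=
  if h : j < n + 1 then X ⟨j, h⟩ else 0

lemma xv_fin (n : ℕ) (K : Type*) [Field K] (j : Fin (n + 1)) : xv n K j = X j := by
  rw [xv, dif_pos j.2]

lemma hg_eq (n : ℕ) (K : Type*) [Field K] (i j : Fin n) :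
    hg n K i j = xv n K i * xv n K (j + 1) - xv n K j * xv n K (i + 1) := by
  have h1 := xv_fin n K i.castSucc
  have h2 := xv_fin n K j.castSucc
  have h3 := xv_fin n K i.succ
  have h4 := xv_fin n K j.succ
  simp only [Fin.val_castSucc, Fin.val_succ] at h1 h2 h3 h4
  rw [hg, h1, h2, h3, h4]

lemma exists_field {R : Type*} [CommRing R] (P : Ideal R) [P.IsPrime] :
    ∃ θ : R →+* FractionRing (R ⧸ P), ∀ f, θ f = 0 ↔ f ∈ P := by
  refine ⟨(algebraMap (R ⧸ P) (FractionRing (R ⧸ P))).comp (Ideal.Quotient.mk P), fun f => ?_⟩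
  rw [RingHom.comp_apply, map_eq_zero_iff _ (IsFractionRing.injective (R ⧸ P) _),
    Ideal.Quotient.eq_zero_iff_mem]

lemma height_chain {R : Type*} [CommRing R] (m : ℕ) (p : ℕ → PrimeSpectrum R)
    (h : ∀ k, k < m → p k < p (k + 1)) : (m : ℕ∞) ≤ Order.height (p m) := by
  induction m with
  | zero => simp
  | succ m ih =>
    have := ih (fun k hk => h k (by omega))
    calc ((m + 1 : ℕ) : ℕ∞) = (m : ℕ∞) + 1 := by push_cast; rfl
      _ ≤ Order.height (p m) + 1 := by gcongr
      _ ≤ _ := Order.height_add_one_le (h m (by omega))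

lemma height_homs {R T : Type*} [CommRing R] [CommRing T] [IsDomain T] (m : ℕ)
    (φ : ℕ → R →+* T) (ψ : ℕ → T →+* T) (f : ℕ → R)
    (hφ : ∀ k, k < m → φ (k + 1) = (ψ k).comp (φ k))
    (h0 : ∀ k, k < m → φ (k + 1) (f k) = 0) (h1 : ∀ k, k < m → φ k (f k) ≠ 0)
    (P : PrimeSpectrum R) (hP : ∀ g, φ m g = 0 → g ∈ P.asIdeal) :
    (m : ℕ∞) ≤ Order.height P := by
  let p : ℕ → PrimeSpectrum R := fun k => ⟨RingHom.ker (φ k), RingHom.ker_isPrime _⟩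
  refine (height_chain m p ?_).trans (Order.height_mono ?_)
  · intro k hk
    rw [← PrimeSpectrum.asIdeal_lt_asIdeal]
    refine lt_of_le_of_ne ?_ ?_
    · intro g hg
      change φ k g = 0 at hg
      change φ (k + 1) g = 0
      rw [hφ k hk, RingHom.comp_apply, hg, map_zero]
    · intro he
      have : f k ∈ (p (k + 1)).asIdeal := h0 k hk
      rw [← he] at this
      exact h1 k hk this
  · rw [← PrimeSpectrum.asIdeal_le_asIdeal]
    intro g hg
    exact hP g hg

lemma height_case1 (n : ℕ) (K : Type*) [Field K]
    (P : PrimeSpectrum (MvPolynomial (Fin (n + 1)) K))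
    (h : ∀ j, 1 ≤ j → j < n → xv n K j ∈ P.asIdeal) :
    ((n - 1 : ℕ) : ℕ∞) ≤ Order.height P := by
  obtain ⟨θ, hθ⟩ := exists_field P.asIdeal
  let φ : ℕ → MvPolynomial (Fin (n + 1)) K →+* MvPolynomial ℕ K := fun k =>
    (aeval (fun j : Fin (n + 1) =>
      if 1 ≤ (j : ℕ) ∧ (j : ℕ) ≤ k then (0 : MvPolynomial ℕ K) else X (j : ℕ))).toRingHom
  let ψ : ℕ → MvPolynomial ℕ K →+* MvPolynomial ℕ K := fun k =>
    (aeval (fun j : ℕ => if j = k + 1 then (0 : MvPolynomial ℕ K) else X j)).toRingHom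
  refine height_homs (n - 1) φ ψ (fun k => xv n K (k + 1)) ?_ ?_ ?_ P ?_
  · intro k hk
    apply MvPolynomial.ringHom_ext
    · intro r; simp [φ, ψ]
    · intro j
      simp only [φ, ψ, RingHom.comp_apply, AlgHom.toRingHom_eq_coe, RingHom.coe_coe, aeval_X]
      by_cases h1 : 1 ≤ (j : ℕ) ∧ (j : ℕ) ≤ k
      · rw [if_pos (by omega), if_pos h1, map_zero]
      · rw [if_neg h1, aeval_X]
        by_cases h2 : (j : ℕ) = k + 1
        · rw [if_pos (by omega), if_pos h2]
        · rw [if_neg (by omega), if_neg h2]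
  · intro k hk
    simp only [φ, xv, dif_pos (show k + 1 < n + 1 by omega), AlgHom.toRingHom_eq_coe,
      RingHom.coe_coe, aeval_X]
    rw [if_pos (by omega)]
  · intro k hk
    simp only [φ, xv, dif_pos (show k + 1 < n + 1 by omega), AlgHom.toRingHom_eq_coe,
      RingHom.coe_coe, aeval_X]
    rw [if_neg (by omega)]
    exact X_ne_zero _
  · intro g hg
    rw [← hθ]
    let χ : MvPolynomial ℕ K →+* FractionRing (_ ⧸ P.asIdeal) :=
      eval₂Hom (θ.comp C) (fun j => θ (xv n K j))
    have : θ = χ.comp (φ (n - 1)) := by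
      apply MvPolynomial.ringHom_ext
      · intro r; simp [φ, χ]
      · intro j
        simp only [φ, RingHom.comp_apply, AlgHom.toRingHom_eq_coe, RingHom.coe_coe, aeval_X]
        by_cases h1 : 1 ≤ (j : ℕ) ∧ (j : ℕ) ≤ n - 1
        · rw [if_pos h1, map_zero, ← xv_fin, hθ]
          exact h _ h1.1 (by omega)
        · rw [if_neg h1]
          simp [χ, xv_fin]
    rw [this, RingHom.comp_apply, hg, map_zero]

lemma height_case2 (n : ℕ) (hn : 2 ≤ n) (K F : Type*) [Field K] [Field F]
    (P : PrimeSpectrum (MvPolynomial (Fin (n + 1)) K))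
    (θ : MvPolynomial (Fin (n + 1)) K →+* F) (hθ : ∀ f, θ f = 0 ↔ f ∈ P.asIdeal)
    (u : F) (h : ∀ j, j ≤ n → θ (xv n K j) = θ (xv n K 0) * u ^ j) :
    ((n - 1 : ℕ) : ℕ∞) ≤ Order.height P := by
  let φ : ℕ → MvPolynomial (Fin (n + 1)) K →+* MvPolynomial ℕ K := fun k =>
    (aeval (fun j : Fin (n + 1) =>
      if (j : ℕ) ≤ k + 1 then (X 0 * X 1 ^ (j : ℕ) : MvPolynomial ℕ K)
        else X (j : ℕ))).toRingHom
  let ψ : ℕ → MvPolynomial ℕ K →+* MvPolynomial ℕ K := fun k =>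
    (aeval (fun j : ℕ => if j = k + 2 then (X 0 * X 1 ^ j : MvPolynomial ℕ K)
      else X j)).toRingHom
  have hφx : ∀ k j, j ≤ n → φ k (xv n K j) =
      if j ≤ k + 1 then (X 0 * X 1 ^ j : MvPolynomial ℕ K) else X j := by
    intro k j hj
    simp only [φ, xv, dif_pos (show j < n + 1 by omega), AlgHom.toRingHom_eq_coe,
      RingHom.coe_coe, aeval_X]
  refine height_homs (n - 1) φ ψ
    (fun k => xv n K 0 * xv n K (k + 2) - xv n K 1 * xv n K (k + 1)) ?_ ?_ ?_ P ?_
  · intro k hk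
    apply MvPolynomial.ringHom_ext
    · intro r; simp [φ, ψ]
    · intro j
      simp only [φ, ψ, RingHom.comp_apply, AlgHom.toRingHom_eq_coe, RingHom.coe_coe, aeval_X]
      by_cases h1 : (j : ℕ) ≤ k + 1
      · rw [if_pos (by omega), if_pos h1]
        simp
      · rw [if_neg h1, aeval_X]
        by_cases h2 : (j : ℕ) = k + 2
        · rw [if_pos (by omega), if_pos h2]
        · rw [if_neg (by omega), if_neg h2]
  · intro k hk
    simp only [map_sub, map_mul]
    rw [hφx _ _ (by omega), hφx _ _ (by omega), hφx _ _ (by omega), hφx _ _ (by omega),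
      if_pos (by omega), if_pos (by omega), if_pos (by omega), if_pos (by omega)]
    ring
  · intro k hk
    simp only [map_sub, map_mul]
    rw [hφx _ _ (by omega), hφx _ _ (by omega), hφx _ _ (by omega), hφx _ _ (by omega),
      if_pos (by omega), if_neg (by omega), if_pos (by omega), if_pos (by omega)]
    intro he
    have := congrArg (MvPolynomial.eval (fun j : ℕ => if j = 1 then (0 : K) else 1)) he
    simp at this
  · intro g hg
    rw [← hθ]
    let χ : MvPolynomial ℕ K →+* F :=
      eval₂Hom (θ.comp C) (fun j => if j = 0 then θ (xv n K 0) else u)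
    have : θ = χ.comp (φ (n - 1)) := by
      apply MvPolynomial.ringHom_ext
      · intro r; simp [φ, χ]
      · intro j
        simp only [φ, RingHom.comp_apply, AlgHom.toRingHom_eq_coe, RingHom.coe_coe, aeval_X]
        rw [if_pos (by omega), ← xv_fin, h _ (by omega)]
        simp [χ]
    rw [this, RingHom.comp_apply, hg, map_zero]

/-- The field-point characterisation of primes containing an ideal of a graph containing the path. -/
lemma hankel_le (n : ℕ) (K F : Type*) [Field K] [Field F] (G : SimpleGraph (Fin n))
    (P : Ideal (MvPolynomial (Fin (n + 1)) K))
    (θ : MvPolynomial (Fin (n + 1)) K →+* F) (hθ : ∀ f, θ f = 0 ↔ f ∈ P) :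
    hankelIdeal n K G ≤ P ↔ ∀ i j : Fin n, i < j → G.Adj i j →
      θ (xv n K i) * θ (xv n K (j + 1)) = θ (xv n K j) * θ (xv n K (i + 1)) := by
  rw [hankelIdeal, Ideal.span_le]
  constructor
  · intro h i j hij hadj
    have := h (show hg n K i j ∈ hgenSet n K G from ⟨i, j, hij, hadj, rfl⟩)
    rw [SetLike.mem_coe, ← hθ, hg_eq, map_sub, map_mul, map_mul, sub_eq_zero] at this
    exact this
  · rintro h f ⟨i, j, hij, hadj, rfl⟩
    rw [SetLike.mem_coe, ← hθ, hg_eq, map_sub, map_mul, map_mul, sub_eq_zero]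
    exact h i j hij hadj

lemma path_dich (n : ℕ) (K F : Type*) [Field K] [Field F] (G : SimpleGraph (Fin n))
    (hG : pathG n ≤ G)
    (P : Ideal (MvPolynomial (Fin (n + 1)) K))
    (θ : MvPolynomial (Fin (n + 1)) K →+* F) (hθ : ∀ f, θ f = 0 ↔ f ∈ P)
    (hP : hankelIdeal n K G ≤ P) :
    (∀ j, 1 ≤ j → j < n → θ (xv n K j) = 0) ∨
      (θ (xv n K 0) ≠ 0 ∧ ∀ j, j ≤ n →
        θ (xv n K j) = θ (xv n K 0) * (θ (xv n K 1) / θ (xv n K 0)) ^ j) := by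
  apply dich n (fun j => θ (xv n K j))
  intro i hi
  have hadj : G.Adj ⟨i, by omega⟩ ⟨i + 1, by omega⟩ := by
    apply hG
    simp [pathG, SimpleGraph.fromRel_adj]
  have := (hankel_le n K F G P θ hθ).1 hP ⟨i, by omega⟩ ⟨i + 1, by omega⟩ (by simp) hadj
  simp only at this ⊢
  rw [show i + 2 = i + 1 + 1 from rfl, this]
  ring

lemma radical_eq_of {R : Type*} [CommRing R] (I J : Ideal R)
    (h : ∀ P : Ideal R, P.IsPrime → (I ≤ P ↔ J ≤ P)) : I.radical = J.radical := by
  rw [Ideal.radical_eq_sInf, Ideal.radical_eq_sInf]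
  congr 1
  ext P
  exact ⟨fun ⟨a, b⟩ => ⟨(h P b).1 a, b⟩, fun ⟨a, b⟩ => ⟨(h P b).2 a, b⟩⟩

lemma ht_le_ara {R : Type*} [CommRing R] [IsNoetherianRing R] (I : Ideal R) (hI : I ≠ ⊤) :
    ht I ≤ ara I := by
  refine le_iInf₂ fun s hs => ?_
  have hs' : Ideal.span (s : Set R) ≠ ⊤ := by
    intro h
    rw [h, Ideal.radical_top, eq_comm, Ideal.radical_eq_top] at hs
    exact hI hs
  obtain ⟨p, hp⟩ := Ideal.nonempty_minimalPrimes hs'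
  have hpp : p.IsPrime := hp.isPrime
  have hle := Ideal.height_le_card_of_mem_minimalPrimes_span_finset hp
  have h2 := PrimeSpectrum.height_eq_orderHeight (⟨p, hpp⟩ : PrimeSpectrum R)
  refine le_trans (iInf₂_le (⟨p, hpp⟩ : PrimeSpectrum R) ?_) (h2 ▸ hle)
  change I ≤ p
  exact Ideal.le_radical.trans (hs ▸ (hpp.radical_le_iff.2 hp.le))

lemma ara_le {R : Type*} [CommRing R] (I : Ideal R) (m : ℕ) (f : ℕ → R)
    (h : ∀ P : Ideal R, P.IsPrime → ((∀ k, k < m → f k ∈ P) ↔ I ≤ P)) :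
    ara I ≤ m := by
  classical
  refine le_trans (iInf₂_le ((Finset.range m).image f) ?_) ?_
  · apply radical_eq_of
    intro P hP
    rw [← h P hP, Ideal.span_le]
    constructor
    · intro hh k hk
      exact hh (by simpa using ⟨k, hk, rfl⟩)
    · rintro hh x hx
      obtain ⟨k, hk, rfl⟩ : ∃ k, k < m ∧ f k = x := by simpa using hx
      exact hh k hk
  · exact_mod_cast (Finset.card_image_le).trans (by simp)

lemma ne_top (n : ℕ) (K : Type*) [Field K] (G : SimpleGraph (Fin n)) :
    hankelIdeal n K G ≠ ⊤ := by
  intro h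
  have hle : hankelIdeal n K G ≤
      RingHom.ker (MvPolynomial.eval (fun _ : Fin (n + 1) => (0 : K))) := by
    rw [hankelIdeal, Ideal.span_le]
    rintro f ⟨i, j, -, -, rfl⟩
    simp [hg, RingHom.mem_ker]
  rw [h] at hle
  have : (1 : MvPolynomial (Fin (n + 1)) K) ∈
      RingHom.ker (MvPolynomial.eval (fun _ : Fin (n + 1) => (0 : K))) := hle trivial
  simp [RingHom.mem_ker] at this

lemma le_ht (n : ℕ) (hn : 2 ≤ n) (K : Type*) [Field K] (G : SimpleGraph (Fin n))
    (hG : pathG n ≤ G) : ((n - 1 : ℕ) : ℕ∞) ≤ ht (hankelIdeal n K G) := by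
  refine le_iInf₂ fun P hP => ?_
  obtain ⟨θ, hθ⟩ := exists_field P.asIdeal
  rcases path_dich n K _ G hG P.asIdeal θ hθ hP with h | ⟨-, h⟩
  · exact height_case1 n K P (fun j h1 h2 => (hθ _).1 (h j h1 h2))
  · exact height_case2 n hn K _ P θ hθ _ h

lemma ara_le_cycle (n : ℕ) (hn : 2 ≤ n) (K : Type*) [Field K] (G : SimpleGraph (Fin n))
    (hG : pathG n ≤ G) (z0 : 0 < n) (z1 : n - 1 < n) (hadj : G.Adj ⟨0, z0⟩ ⟨n - 1, z1⟩) :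
    ara (hankelIdeal n K G) ≤ ((n - 1 : ℕ) : ℕ∞) := by
  refine ara_le _ _ (fun k => rv (xv n K) (k + 1)) ?_
  intro P hP
  obtain ⟨θ, hθ⟩ := exists_field P
  constructor
  · intro h
    have h' : ∀ i, 1 ≤ i → i < n → rv (fun j => θ (xv n K j)) i = 0 := by
      intro i h1 h2
      have := h (i - 1) (by omega)
      rw [← hθ, rv_map, Nat.sub_add_cancel h1] at this
      exact this
    rw [hankel_le n K _ G P θ hθ]
    intro i j hij _
    rcases rv_curve n _ h' with h | ⟨-, h⟩
    · rw [h i i.2, h j j.2]; ring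
    · rw [h i (by omega), h j (by omega), h (i + 1) (by omega), h (j + 1) (by omega)]
      ring
  · intro hI k hk
    rw [← hθ, rv_map]
    rcases path_dich n K _ G hG P θ hθ hI with h | ⟨-, h⟩
    · have h0 := (hankel_le n K _ G P θ hθ).1 hI _ _
        (by rw [Fin.lt_def]; simp only; omega) hadj
      simp only [zero_add] at h0
      rw [Nat.sub_add_cancel (by omega), h 1 (by omega) (by omega), mul_zero] at h0
      apply Finset.sum_eq_zero
      intro α hα
      simp only
      rcases Nat.eq_zero_or_pos α with rfl | hpos
      · by_cases hk2 : k + 1 + 1 = n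
        · rw [hk2, Nat.sub_zero, pow_succ]
          linear_combination
            (-1) ^ 0 * ((k + 1).choose 0 : FractionRing (_ ⧸ P)) * θ (xv n K (k + 1)) ^ 0 *
              θ (xv n K n) ^ k * h0
        · rw [h (k + 1 + 1) (by omega) (by omega)]
          simp
      · rw [h α hpos (by have := Finset.mem_range.1 hα; omega)]
        ring
    · rw [rv_geo _ _ _ _ (fun j hj => h j (by omega)), h (k + 1) (by omega),
        h (k + 1 + 1) (by omega)]
      rw [show ∀ c u : FractionRing (_ ⧸ P), -(u * (c * u ^ (k + 1))) + c * u ^ (k + 1 + 1) = 0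
        from fun c u => by ring]
      simp

lemma ara_le_path (n : ℕ) (hn : 2 ≤ n) (K : Type*) [Field K] (G : SimpleGraph (Fin n))
    (hG : pathG n ≤ G) (z0 : 0 < n) (z1 : n - 1 < n) (hadj : ¬ G.Adj ⟨0, z0⟩ ⟨n - 1, z1⟩) :
    ara (hankelIdeal n K G) ≤ ((n - 1 : ℕ) : ℕ∞) := by
  refine ara_le _ _
    (fun k => xv n K k * xv n K (k + 2) - xv n K (k + 1) ^ 2) ?_
  intro P hP
  obtain ⟨θ, hθ⟩ := exists_field P
  constructor
  · intro h
    have h' : ∀ i, i + 2 ≤ n → θ (xv n K i) * θ (xv n K (i + 2)) = θ (xv n K (i + 1)) ^ 2 := by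
      intro i h1
      have := h i (by omega)
      rw [← hθ, map_sub, map_mul, map_pow, sub_eq_zero] at this
      exact this
    rw [hankel_le n K _ G P θ hθ]
    intro i j hij hij2
    have hij' : (i : ℕ) < j := hij
    rcases dich n (fun j => θ (xv n K j)) h' with h | ⟨-, h⟩
    · rw [h j (by omega) j.2, zero_mul]
      by_cases hi : (i : ℕ) = 0
      · by_cases hj : (j : ℕ) = n - 1
        · exfalso
          apply hadj
          rw [show i = ⟨0, z0⟩ from Fin.ext hi,
            show j = ⟨n - 1, z1⟩ from Fin.ext hj] at hij2
          exact hij2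
        · rw [h (j + 1) (by omega) (by omega), mul_zero]
      · rw [h i (by omega) i.2, zero_mul]
    · rw [h i (by omega), h j (by omega), h (i + 1) (by omega), h (j + 1) (by omega)]
      ring
  · intro hI k hk
    rw [← hθ, map_sub, map_mul, map_pow]
    rcases path_dich n K _ G hG P θ hθ hI with h | ⟨-, h⟩
    · rw [h (k + 1) (by omega) (by omega)]
      have hadj' : G.Adj ⟨k, by omega⟩ ⟨k + 1, by omega⟩ := by
        apply hG
        simp [pathG, SimpleGraph.fromRel_adj]
      have := (hankel_le n K _ G P θ hθ).1 hI ⟨k, by omega⟩ ⟨k + 1, by omega⟩ (by simp) hadj'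
      simp only at this
      rw [h (k + 1) (by omega) (by omega)] at this
      rw [show k + 2 = k + 1 + 1 from rfl, this]
      ring
    · rw [h k (by omega), h (k + 1) (by omega), h (k + 2) (by omega)]
      ring

end Hank

/-- For a connected labeled Hamiltonian or semi-Hamiltonian graph `G` on
`[n]`, `ara(I_G) = n - 1`; in particular `I_G` is a set-theoretic complete intersection. -/
theorem stmt_12 (n : ℕ) (K : Type*) [Field K] (hn : 2 ≤ n)
    (G : SimpleGraph (Fin n)) (hG : G.Connected)
    (hHam : cycleG n ≤ G ∨
      (pathG n ≤ G ∧ ¬ G.Adj ⟨0, by omega⟩ ⟨n - 1, by omega⟩)) :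
    ara (hankelIdeal n K G) = ((n - 1 : ℕ) : ℕ∞) ∧
      ht (hankelIdeal n K G) = ara (hankelIdeal n K G) := by
  have main : pathG n ≤ G ∧ ara (hankelIdeal n K G) ≤ ((n - 1 : ℕ) : ℕ∞) := by
    rcases hHam with hc | ⟨hp, hna⟩
    · have hp : pathG n ≤ G := by
        refine le_trans ?_ hc
        intro i j hij
        simp only [pathG, cycleG, SimpleGraph.fromRel_adj] at hij ⊢
        tauto
      refine ⟨hp, Hank.ara_le_cycle n hn K G hp (by omega) (by omega) ?_⟩
      apply hc
      simp only [cycleG, SimpleGraph.fromRel_adj, ne_eq, Fin.mk.injEq]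
      exact ⟨by omega, Or.inl (Or.inr ⟨by trivial, by trivial⟩)⟩
    · exact ⟨hp, Hank.ara_le_path n hn K G hp _ _ hna⟩
  obtain ⟨hp, hle⟩ := main
  have h1 := Hank.le_ht n hn K G hp
  have h2 := Hank.ht_le_ara (hankelIdeal n K G) (Hank.ne_top n K G)
  have h3 : ara (hankelIdeal n K G) = ((n - 1 : ℕ) : ℕ∞) := le_antisymm hle (h1.trans h2)
  exact ⟨h3, le_antisymm h2 (h3 ▸ h1)⟩
end

section
/- Let T be a tree on n vertices equipped with a rooted labeling. If T is not a path, then height I_T ≤ n-2; in particular, S/I_T is not a complete intersection. -/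
open MvPolynomial

/-- A rooted (BFS) labeling of a tree on `Fin n` with root `0`: every non-root vertex `v`
has a parent, a neighbor with a smaller label, and the labels are assigned consecutively,
i.e. the parent function is monotone on non-root vertices. -/
def IsRootedLabeling {n : ℕ} (T : SimpleGraph (Fin n)) (parent : Fin n → Fin n) : Prop :=
  (∀ v : Fin n, (v : ℕ) ≠ 0 → T.Adj (parent v) v ∧ parent v < v) ∧
    ∀ u v : Fin n, (u : ℕ) ≠ 0 → (v : ℕ) ≠ 0 → u ≤ v → parent u ≤ parent v

/-- `T` is a path graph, i.e. isomorphic (as an abstract graph) to `L_n`. -/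
def IsPathGraph {n : ℕ} (T : SimpleGraph (Fin n)) : Prop :=
  ∃ e : Fin n ≃ Fin n, ∀ i j : Fin n, T.Adj i j ↔ (pathG n).Adj (e i) (e j)

/-- A leaf of a graph: a vertex with exactly one neighbor. -/
def IsLeaf {n : ℕ} (T : SimpleGraph (Fin n)) (v : Fin n) : Prop :=
  (T.neighborSet v).ncard = 1

theorem exists_three_le_degree (n : ℕ) (hn : 1 ≤ n) (T : SimpleGraph (Fin n)) (hT : T.IsTree)
    [DecidableRel T.Adj] (hnp : ¬ IsPathGraph T) : ∃ v, 3 ≤ T.degree v := by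
  classical
  by_contra! hdeg
  apply hnp
  -- longest path
  let P : ℕ → Prop := fun k => ∃ (u v : Fin n) (p : T.Walk u v), p.IsPath ∧ p.length = k
  have hP0 : P 0 := ⟨⟨0, hn⟩, ⟨0, hn⟩, SimpleGraph.Walk.nil, SimpleGraph.Walk.IsPath.nil, rfl⟩
  have hb : ∀ k, P k → k ≤ n := by
    rintro k ⟨u, v, p, hp, rfl⟩
    have := hp.length_lt
    simp at this
    omega
  have hmax := Nat.findGreatest_spec (P := P) (Nat.zero_le n) hP0
  have hgt : ∀ k, P k → k ≤ Nat.findGreatest P n := fun k hk =>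
    Nat.le_findGreatest (hb k hk) hk
  obtain ⟨u, v, p, hp, hlen⟩ := hmax
  rw [← hlen] at hgt
  have three : ∀ x a b c : Fin n, T.Adj x a → T.Adj x b → T.Adj x c → a ≠ b → a ≠ c → b ≠ c →
      False := by
    intro x a b c ha hb hc hab hac hbc
    have h1 : ({a, b, c} : Finset (Fin n)) ⊆ T.neighborFinset x := by
      intro y hy
      simp only [Finset.mem_insert, Finset.mem_singleton] at hy
      rw [SimpleGraph.mem_neighborFinset]
      rcases hy with rfl | rfl | rfl <;> assumption
    have h2 := Finset.card_le_card h1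
    rw [Finset.card_eq_three.mpr ⟨a, b, c, hab, hac, hbc, rfl⟩,
      SimpleGraph.card_neighborFinset_eq_degree] at h2
    have := hdeg x
    omega
  have closed : ∀ x y, x ∈ p.support → T.Adj x y → y ∈ p.support := by
    intro x y hx hxy
    by_contra hy
    obtain ⟨i, rfl, hi⟩ := SimpleGraph.Walk.mem_support_iff_exists_getVert.mp hx
    rcases Nat.eq_zero_or_pos i with rfl | hi0
    · simp only [SimpleGraph.Walk.getVert_zero] at hxy
      have := hgt _ ⟨_, _, SimpleGraph.Walk.cons hxy.symm p, hp.cons hy, rfl⟩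
      simp at this
    rcases Nat.lt_or_ge i p.length with hil | hil
    · have h1 := p.adj_getVert_succ hil
      have h2 := p.adj_getVert_succ (i := i - 1) (by omega)
      rw [Nat.sub_add_cancel hi0] at h2
      refine three _ _ _ _ hxy h1 h2.symm ?_ ?_ ?_
      · rintro rfl; exact hy (p.getVert_mem_support _)
      · rintro rfl; exact hy (p.getVert_mem_support _)
      · intro h
        have := hp.getVert_injOn (by simp; omega) (by simp; omega) h
        omega
    · rw [p.getVert_of_length_le hil] at hxy
      have := hgt _ ⟨_, _, p.concat hxy, hp.concat hy hxy, rfl⟩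
      simp at this
  have all : ∀ y, y ∈ p.support := by
    intro y
    obtain ⟨q⟩ := hT.connected.preconnected u y
    have key : ∀ (a b : Fin n) (q : T.Walk a b), a ∈ p.support → b ∈ p.support := by
      intro a b q
      induction q with
      | nil => exact id
      | cons h q ih => exact fun ha => ih (closed _ _ ha h)
    exact key _ _ q p.start_mem_support
  have hham : p.IsHamiltonian := hp.isHamiltonian_iff.mpr all
  have hl : p.length + 1 = n := by
    have := hham.length_support
    simpa using this
  let f : Fin n → Fin n := fun i => p.getVert i
  have finj : Function.Injective f := by
    intro i j hij
    have := hp.getVert_injOn (by simp; omega) (by simp; omega) hij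
    exact Fin.ext this
  let e : Fin n ≃ Fin n := Equiv.ofBijective f (Finite.injective_iff_bijective.mp finj)
  have hpg : pathG n = SimpleGraph.pathGraph n := by
    ext i j
    rw [SimpleGraph.pathGraph_adj, pathG, SimpleGraph.fromRel_adj]
    constructor
    · exact fun h => h.2
    · intro h
      refine ⟨?_, h⟩
      rintro rfl
      omega
  let H : SimpleGraph (Fin n) := (pathG n).comap e.symm
  have iso : H ≃g pathG n := ⟨e.symm, by intro a b; rfl⟩
  have hHc : H.Connected := by
    rw [iso.connected_iff, hpg]
    obtain ⟨m, rfl⟩ : ∃ m, n = m + 1 := ⟨n - 1, by omega⟩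
    exact SimpleGraph.pathGraph_connected m
  have hHle : H ≤ T := by
    intro a b hab
    have hab' : (pathG n).Adj (e.symm a) (e.symm b) := hab
    rw [hpg, SimpleGraph.pathGraph_adj] at hab'
    have ha : p.getVert (e.symm a) = a := e.apply_symm_apply a
    have hb : p.getVert (e.symm b) = b := e.apply_symm_apply b
    rcases hab' with h | h
    · have := p.adj_getVert_succ (i := (e.symm a : ℕ)) (by omega)
      rw [h, ha, hb] at this
      exact this
    · have := p.adj_getVert_succ (i := (e.symm b : ℕ)) (by omega)
      rw [h, ha, hb] at this
      exact this.symm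
  have hTH : T ≤ H := (SimpleGraph.isTree_iff_minimal_connected.mp hT).2 hHc hHle
  exact ⟨e.symm, fun i j => ⟨fun h => hTH h, fun h => hHle h⟩⟩

theorem sdist {n : ℕ} {a b c d : Fin (n+1)} (h : Finsupp.single a 1 + Finsupp.single b 1
    = (Finsupp.single c 1 + Finsupp.single d 1 : Fin (n+1) →₀ ℕ)) :
    (a = c ∧ b = d) ∨ (a = d ∧ b = c) := by
  have h1 := DFunLike.congr_fun h a
  have h2 := DFunLike.congr_fun h b
  have h3 := DFunLike.congr_fun h c
  have h4 := DFunLike.congr_fun h d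
  simp only [Finsupp.add_apply, Finsupp.single_apply] at h1 h2 h3 h4
  grind

theorem hg_eq (n : ℕ) (K : Type*) [Field K] (i j : Fin n) :
    hg n K i j = monomial (Finsupp.single i.castSucc 1 + Finsupp.single j.succ 1) 1
      - monomial (Finsupp.single j.castSucc 1 + Finsupp.single i.succ 1) 1 := by
  simp [hg, X, monomial_mul]

/-- Ordered generator attached to an unordered edge. -/
noncomputable def hgE (n : ℕ) (K : Type*) [Field K] (e : Sym2 (Fin n)) :
    MvPolynomial (Fin (n + 1)) K := hg n K e.inf e.sup

theorem hgE_linInd (n : ℕ) (K : Type*) [Field K] (T : SimpleGraph (Fin n)) :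
    LinearIndependent K (fun e : T.edgeSet => hgE n K e.1) := by
  classical
  rw [linearIndependent_iff']
  intro s g hs
  by_contra! hne
  obtain ⟨e0, he0, hg0⟩ := hne
  obtain ⟨e, he, hmax⟩ := Finset.exists_max_image (s.filter (fun e => g e ≠ 0))
    (fun e => (e.1.sup : ℕ) - (e.1.inf : ℕ)) ⟨e0, by simp [he0, hg0]⟩
  rw [Finset.mem_filter] at he
  have lt : ∀ e : T.edgeSet, e.1.inf < e.1.sup := by
    rintro ⟨e, hee⟩
    induction e with
    | _ a b =>
      have : a ≠ b := T.ne_of_adj hee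
      simpa [eq_comm] using this
  have hc := congrArg (coeff (Finsupp.single e.1.inf.castSucc 1 + Finsupp.single e.1.sup.succ 1)) hs
  rw [coeff_sum, coeff_zero, Finset.sum_eq_single e] at hc
  · have h1 : Finsupp.single e.1.sup.castSucc 1 + Finsupp.single e.1.inf.succ 1 ≠
      (Finsupp.single e.1.inf.castSucc 1 + Finsupp.single e.1.sup.succ 1 : Fin (n+1) →₀ ℕ) := by
      intro h
      have := lt e
      rcases sdist h with h | h <;> simp [Fin.ext_iff] at h <;> omega
    rw [hgE, hg_eq, coeff_smul, coeff_sub, coeff_monomial, coeff_monomial, if_pos rfl,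
      if_neg h1] at hc
    simp at hc
    exact he.2 hc
  · intro e' he' hne
    by_cases hg' : g e' = 0
    · simp [hg']
    have hm := hmax e' (by simp [he', hg'])
    have l1 := lt e
    have l2 := lt e'
    have h1 : Finsupp.single e'.1.sup.castSucc 1 + Finsupp.single e'.1.inf.succ 1 ≠
      (Finsupp.single e.1.inf.castSucc 1 + Finsupp.single e.1.sup.succ 1 : Fin (n+1) →₀ ℕ) := by
      intro h
      rcases sdist h with h | h <;> simp [Fin.ext_iff] at h <;> omega
    have h2 : Finsupp.single e'.1.inf.castSucc 1 + Finsupp.single e'.1.sup.succ 1 ≠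
      (Finsupp.single e.1.inf.castSucc 1 + Finsupp.single e.1.sup.succ 1 : Fin (n+1) →₀ ℕ) := by
      intro h
      apply hne
      apply Subtype.ext
      rw [← Sym2.inf_eq_inf_and_sup_eq_sup]
      rcases sdist h with h | h
      · exact ⟨by simpa using h.1, by simpa using h.2⟩
      · simp [Fin.ext_iff] at h; omega
    rw [hgE, hg_eq, coeff_smul, coeff_sub, coeff_monomial, coeff_monomial, if_neg h1,
      if_neg h2]
    simp
  · intro h; exact absurd he.1 h

theorem hgenSet_eq (n : ℕ) (K : Type*) [Field K] (T : SimpleGraph (Fin n)) :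
    hgenSet n K T = hgE n K '' T.edgeSet := by
  ext f
  constructor
  · rintro ⟨i, j, hij, hadj, rfl⟩
    exact ⟨s(i, j), hadj, by simp [hgE, hij.le]⟩
  · rintro ⟨e, he, rfl⟩
    induction e with
    | _ a b =>
      have hne : a ≠ b := T.ne_of_adj he
      have hab : T.Adj a b := he
      rcases lt_or_gt_of_ne hne with h | h
      · exact ⟨a, b, h, hab, by simp [hgE, h.le]⟩
      · exact ⟨b, a, h, hab.symm, by simp [hgE, h.le]⟩

theorem hg_homog (n : ℕ) (K : Type*) [Field K] (i j : Fin n) :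
    (hg n K i j).IsHomogeneous 2 :=
  ((isHomogeneous_X K _).mul (isHomogeneous_X K _)).sub
    ((isHomogeneous_X K _).mul (isHomogeneous_X K _))

theorem ideal_low (n : ℕ) (K : Type*) [Field K] (T : SimpleGraph (Fin n))
    (f : MvPolynomial (Fin (n+1)) K) (hf : f ∈ hankelIdeal n K T) :
    ∀ d, d.degree < 2 → coeff d f = 0 := by
  intro d hd
  induction hf using Submodule.span_induction generalizing d with
  | mem x hx =>
    obtain ⟨i, j, -, -, rfl⟩ := hx
    by_contra h
    have := (hg_homog n K i j).coeff_eq_zero (d := d) (by omega)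
    exact h this
  | zero => simp
  | add x y _ _ hx hy => simp [hx d hd, hy d hd]
  | smul a x _ hx =>
    rw [smul_eq_mul, coeff_mul]
    apply Finset.sum_eq_zero
    rintro ⟨p, q⟩ hpq
    rw [Finset.HasAntidiagonal.mem_antidiagonal] at hpq
    have : p.degree + q.degree = d.degree := by
      rw [← hpq]; simp
    simp only
    rw [hx q (by omega), mul_zero]

theorem hom2_mul (n : ℕ) (K : Type*) [Field K] (T : SimpleGraph (Fin n))
    (f a : MvPolynomial (Fin (n+1)) K) (hf : f ∈ hankelIdeal n K T) :
    homogeneousComponent 2 (a * f) = coeff 0 a • homogeneousComponent 2 f := by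
  ext d
  rw [coeff_smul, coeff_homogeneousComponent, coeff_homogeneousComponent]
  split_ifs with hd
  · rw [coeff_mul, Finset.sum_eq_single (0, d)]
    · simp
    · rintro ⟨p, q⟩ hpq hne
      rw [Finset.HasAntidiagonal.mem_antidiagonal] at hpq
      have h1 : p.degree + q.degree = d.degree := by
        rw [← hpq]; simp
      have h2 : p.degree ≠ 0 := by
        intro h
        rw [Finsupp.degree_eq_zero_iff] at h
        subst h
        simp at hpq
        exact hne (by rw [hpq])
      simp only
      rw [ideal_low n K T f hf q (by omega), mul_zero]
    · intro h; simp at h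
  · simp

theorem mu_ge (n : ℕ) (K : Type*) [Field K] (T : SimpleGraph (Fin n)) [Fintype T.edgeSet] :
    (T.edgeFinset.card : ℕ∞) ≤ mu (hankelIdeal n K T) := by
  classical
  refine le_iInf₂ fun s hs => ?_
  let W : Submodule K (MvPolynomial (Fin (n+1)) K) :=
    Submodule.span K ((s.image (homogeneousComponent 2) : Finset _) : Set _)
  have hsI : ∀ f ∈ s, f ∈ hankelIdeal n K T := by
    intro f hf
    rw [← hs]
    exact Ideal.subset_span hf
  have key : ∀ f ∈ hankelIdeal n K T, homogeneousComponent 2 f ∈ W := by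
    intro f hf
    rw [← hs] at hf
    induction hf using Submodule.span_induction with
    | mem x hx => exact Submodule.subset_span (by simpa using ⟨x, hx, rfl⟩)
    | zero => simp
    | add x y _ _ hx hy => rw [map_add]; exact W.add_mem hx hy
    | smul a x hx' hx =>
      rw [smul_eq_mul, hom2_mul n K T x a (by rw [← hs]; exact hx')]
      exact W.smul_mem _ hx
  have hmem : ∀ e : T.edgeSet, hgE n K e.1 ∈ W := by
    intro e
    have h1 := key (hgE n K e.1) (Ideal.subset_span (by rw [hgenSet_eq]; exact ⟨e.1, e.2, rfl⟩))
    rwa [hgE, homogeneousComponent_of_mem (hg_homog n K _ _), if_pos rfl] at h1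
  have hli := hgE_linInd n K T
  have h1 : (Set.range (fun e : T.edgeSet => hgE n K e.1)) ⊆ W := by
    rintro _ ⟨e, rfl⟩
    exact hmem e
  have hli' : LinearIndependent K (fun e : T.edgeSet => (⟨hgE n K e.1, hmem e⟩ : W)) :=
    LinearIndependent.of_comp W.subtype hli
  have hfd : Module.Finite K W := Module.Finite.span_finset K _
  have h2 := hli'.fintype_card_le_finrank
  have h3 : Module.finrank K W ≤ s.card :=
    (finrank_span_finset_le_card _).trans Finset.card_image_le
  rw [SimpleGraph.edgeFinset_card]
  exact_mod_cast h2.trans h3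

theorem ht_le (n : ℕ) (K : Type*) [Field K] (T : SimpleGraph (Fin n)) [DecidableRel T.Adj]
    (v : Fin n) :
    ht (hankelIdeal n K T) ≤ ((T.edgeFinset.card - T.degree v + 2 : ℕ) : ℕ∞) := by
  classical
  let s : Finset (MvPolynomial (Fin (n+1)) K) :=
    ((T.edgeFinset \ T.incidenceFinset v).image (hgE n K)) ∪ {X v.castSucc, X v.succ}
  have hcard : s.card ≤ T.edgeFinset.card - T.degree v + 2 := by
    refine (Finset.card_union_le _ _).trans (Nat.add_le_add ?_ Finset.card_le_two)
    refine Finset.card_image_le.trans ?_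
    rw [Finset.card_sdiff_of_subset (T.incidenceFinset_subset v),
      SimpleGraph.card_incidenceFinset_eq_degree]
  have hle : hankelIdeal n K T ≤ Ideal.span (s : Set (MvPolynomial (Fin (n+1)) K)) := by
    refine Ideal.span_le.mpr ?_
    have hX1 : (X v.castSucc : MvPolynomial (Fin (n+1)) K) ∈ Ideal.span
      (s : Set (MvPolynomial (Fin (n+1)) K)) := Ideal.subset_span (by simp [s])
    have hX2 : (X v.succ : MvPolynomial (Fin (n+1)) K) ∈ Ideal.span
      (s : Set (MvPolynomial (Fin (n+1)) K)) := Ideal.subset_span (by simp [s])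
    rintro f ⟨i, j, hij, hadj, rfl⟩
    by_cases hi : i = v
    · subst hi
      exact Ideal.sub_mem _ (Ideal.mul_mem_right _ _ hX1) (Ideal.mul_mem_left _ _ hX2)
    by_cases hj : j = v
    · subst hj
      exact Ideal.sub_mem _ (Ideal.mul_mem_left _ _ hX2) (Ideal.mul_mem_right _ _ hX1)
    apply Ideal.subset_span
    simp only [s, Finset.coe_union, Finset.coe_image]
    left
    refine ⟨s(i, j), ?_, by simp [hgE, hij.le]⟩
    simp [hadj, SimpleGraph.incidenceSet, Ne.symm hi, Ne.symm hj]
  have hne : Ideal.span (s : Set (MvPolynomial (Fin (n+1)) K)) ≠ ⊤ := by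
    have : Ideal.span (s : Set (MvPolynomial (Fin (n+1)) K)) ≤
        RingHom.ker (constantCoeff (R := K) (σ := Fin (n+1))) := by
      refine Ideal.span_le.mpr ?_
      intro f hf
      simp only [s, Finset.coe_union, Finset.coe_image, Set.mem_union, Finset.coe_insert,
        Finset.coe_singleton, Set.mem_insert_iff, Set.mem_singleton_iff] at hf
      rw [SetLike.mem_coe, RingHom.mem_ker]
      rcases hf with ⟨e, -, rfl⟩ | rfl | rfl
      · simp [hgE, hg]
      · simp
      · simp
    intro h
    rw [h, top_le_iff] at this
    exact RingHom.ker_ne_top _ this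
  obtain ⟨p, hp⟩ := Ideal.nonempty_minimalPrimes hne
  have hh := Ideal.height_le_card_of_mem_minimalPrimes_span_finset hp
  have hpp : p.IsPrime := hp.1.1
  refine (iInf₂_le (⟨p, hpp⟩ : PrimeSpectrum _) (hle.trans hp.1.2)).trans ?_
  rw [← PrimeSpectrum.height_eq_orderHeight]
  exact hh.trans (by exact_mod_cast hcard)

/-- Let `T` be a tree on `n` vertices with a rooted labeling. If `T` is
not a path, then `height I_T ≤ n - 2`; in particular `S/I_T` is not a complete
intersection. -/
theorem stmt_14 (n : ℕ) (K : Type*) [Field K] (hn : 1 ≤ n)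
    (T : SimpleGraph (Fin n)) (hT : T.IsTree)
    (parent : Fin n → Fin n) (hlab : IsRootedLabeling T parent)
    (hnp : ¬ IsPathGraph T) :
    ht (hankelIdeal n K T) ≤ ((n - 2 : ℕ) : ℕ∞) ∧
      ¬ (mu (hankelIdeal n K T) = ht (hankelIdeal n K T)) := by
  classical
  obtain ⟨v, hv⟩ := exists_three_le_degree n hn T hT hnp
  have hE : T.edgeFinset.card + 1 = n := by simpa using hT.card_edgeFinset
  have h1 := ht_le n K T v
  have h2 := T.degree_le_card_edgeFinset v
  have h3 := mu_ge n K T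
  have h4 : ht (hankelIdeal n K T) ≤ ((n - 2 : ℕ) : ℕ∞) :=
    h1.trans (by exact_mod_cast (by omega))
  refine ⟨h4, fun h => ?_⟩
  rw [h] at h3
  have h5 := h3.trans h4
  have h6 : T.edgeFinset.card ≤ n - 2 := by exact_mod_cast h5
  omega
end
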